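/- arXiv:1901.06814 — 2 statements merged into one kernel-verified Lean document; each statement's English description precedes it below -/
import Mathlib

section
/- Let τ > 0, t_j = jτ, and P_{k−j} = τ^β · ϱ_{k−j}. For every real μ > 0 and every integer k ≥ 1, μ · ∑_{j=0}^{k−1} P_{k−j} · E_β(μ · t_j^β) ≤ E_β(μ · t_k^β) − 1. -/
open Finset

/-- Generalized binomial coefficient `C(α, j) = α(α−1)⋯(α−j+1)/j!`. -/
noncomputable def genBinom (α : ℝ) (j : ℕ) : ℝ :=
  (∏ i ∈ Finset.range j, (α - i)) / (Nat.factorial j)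

/-- The coefficients `ϱ_j = (−1)^j C(−β, j)` of `(1−z)^{−β}`. -/
noncomputable def varrho (β : ℝ) (j : ℕ) : ℝ := (-1 : ℝ) ^ j * genBinom (-β) j

/-- The Mittag-Leffler function `E_β(z) = ∑_{l=0}^∞ z^l / Γ(1 + lβ)`. -/
noncomputable def mittagLeffler (β z : ℝ) : ℝ :=
  ∑' l : ℕ, z ^ l / Real.Gamma (1 + (l : ℝ) * β)

/-!
The function `u x = E_β (μ * x ^ β)` solves the Volterra equation `u t - 1 = μ * (I^β u) t`, where
`I^β` is the Riemann–Liouville integral: `I^β` maps each monomial of the series to a multiple of the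
next one, by Euler's Beta integral.

The convolution with the weights `τ ^ β * ϱ_{k-j}` is a lower bound for `I^β`. Log-convexity of `Γ`
gives `ϱ_n ≤ n ^ (β - 1) / Γ β`, so the convolution lies below the left-endpoint Riemann sum of the
integrand `(t - x) ^ (β - 1) * u x / Γ β`, which is increasing because `β ≤ 1` and `u` is increasing
and nonnegative.
-/

open Filter Topology MeasureTheory

section Gamma

theorem Gamma_add_le_rpow_mul_Gamma {x s : ℝ} (hx : 0 < x) (hs0 : 0 ≤ s) (hs1 : s ≤ 1) :
    Real.Gamma (x + s) ≤ x ^ s * Real.Gamma x := by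
  have hΓx : 0 < Real.Gamma x := Real.Gamma_pos_of_pos hx
  have hx1 : (0 : ℝ) < x + 1 := by positivity
  have log_convex := Real.convexOn_log_Gamma.2 (Set.mem_Ioi.2 hx) (Set.mem_Ioi.2 hx1)
    (sub_nonneg.2 hs1) hs0 (sub_add_cancel 1 s)
  have combination : (1 - s) * x + s * (x + 1) = x + s := by ring
  simp only [Function.comp_apply, smul_eq_mul, combination, Real.Gamma_add_one hx.ne',
    Real.log_mul hx.ne' hΓx.ne'] at log_convex
  rw [← Real.log_le_log_iff (Real.Gamma_pos_of_pos (by positivity)) (by positivity),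
    Real.log_mul (by positivity) hΓx.ne', Real.log_rpow hx]
  linarith

theorem Gamma_div_Gamma_add_le {x s : ℝ} (hx : 0 < x) (hs0 : 0 ≤ s) (hs1 : s ≤ 1) :
    Real.Gamma x / Real.Gamma (x + s) ≤ (x + s) ^ (1 - s) / x := by
  have hxs : 0 < x + s := by positivity
  rw [div_le_div_iff₀ (Real.Gamma_pos_of_pos hxs) hx, mul_comm, ← Real.Gamma_add_one hx.ne']
  have h := Gamma_add_le_rpow_mul_Gamma hxs (sub_nonneg.2 hs1) (sub_le_self 1 hs0)
  rwa [show x + s + (1 - s) = x + 1 by ring] at h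

theorem tendsto_Gamma_div_Gamma_add_atTop {s : ℝ} (hs : 0 < s) :
    Tendsto (fun x ↦ Real.Gamma x / Real.Gamma (x + s)) atTop (𝓝 0) := by
  set r := min s 1
  have hr0 : 0 < r := lt_min hs one_pos
  have upper : ∀ᶠ x in atTop, Real.Gamma x / Real.Gamma (x + s) ≤ 2 * x ^ (-r) := by
    filter_upwards [eventually_ge_atTop 2] with x hx
    have hx0 : 0 < x := by linarith
    calc Real.Gamma x / Real.Gamma (x + s) ≤ Real.Gamma x / Real.Gamma (x + r) := by
          have hmono : Real.Gamma (x + r) ≤ Real.Gamma (x + s) :=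
            Real.Gamma_strictMonoOn_Ici.monotoneOn (Set.mem_Ici.2 (by linarith))
              (Set.mem_Ici.2 (by linarith)) (by gcongr; exact min_le_left s 1)
          gcongr
      _ ≤ (x + r) ^ (1 - r) / x := Gamma_div_Gamma_add_le hx0 hr0.le (min_le_right s 1)
      _ ≤ (2 * x) ^ (1 - r) / x := by
          have hr1 : r ≤ 1 := min_le_right s 1
          gcongr
          linarith
      _ = 2 ^ (1 - r) * x ^ (-r) := by
          rw [Real.mul_rpow two_pos.le hx0.le, mul_div_assoc, ← Real.rpow_sub_one hx0.ne']
          ring_nf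
      _ ≤ 2 * x ^ (-r) := by
          gcongr
          exact Real.rpow_le_self_of_one_le one_le_two (by linarith)
  have decay : Tendsto (fun x : ℝ ↦ 2 * x ^ (-r)) atTop (𝓝 0) := by
    simpa using (tendsto_rpow_neg_atTop hr0).const_mul 2
  refine squeeze_zero' ?_ upper decay
  filter_upwards [eventually_gt_atTop 0] with x hx
  exact div_nonneg (Real.Gamma_pos_of_pos hx).le (Real.Gamma_pos_of_pos (add_pos hx hs)).le

end Gamma

section Varrho

variable {β : ℝ}

theorem varrho_succ (β : ℝ) (n : ℕ) : varrho β (n + 1) = varrho β n * ((n + β) / (n + 1)) := by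
  simp only [varrho, genBinom, Finset.prod_range_succ, Nat.factorial_succ, pow_succ]
  push_cast
  field_simp
  ring

theorem varrho_eq_Gamma_div (hβ : 0 < β) (n : ℕ) :
    varrho β n = Real.Gamma (n + β) / (Real.Gamma β * n.factorial) := by
  have hΓ := Real.Gamma_pos_of_pos hβ
  induction n with
  | zero => simp [varrho, genBinom, hΓ.ne']
  | succ n ih =>
    have hΓ_succ : Real.Gamma ((n + 1 : ℕ) + β) = (n + β) * Real.Gamma (n + β) := by
      rw [← Real.Gamma_add_one (by positivity)]
      push_cast
      ring_nf
    rw [varrho_succ, ih, hΓ_succ, Nat.factorial_succ]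
    push_cast
    field_simp

theorem varrho_le_rpow_div_Gamma (hβ0 : 0 < β) (hβ1 : β ≤ 1) {n : ℕ} (hn : 0 < n) :
    varrho β n ≤ (n : ℝ) ^ (β - 1) / Real.Gamma β := by
  have hn0 : (0 : ℝ) < n := mod_cast hn
  have hfactorial : (n.factorial : ℝ) = n * Real.Gamma n := by
    rw [← Real.Gamma_nat_eq_factorial, Real.Gamma_add_one hn0.ne']
  calc varrho β n = Real.Gamma (n + β) / (Real.Gamma β * (n * Real.Gamma n)) := by
        rw [varrho_eq_Gamma_div hβ0, hfactorial]
    _ ≤ (n : ℝ) ^ β * Real.Gamma n / (Real.Gamma β * (n * Real.Gamma n)) := by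
        gcongr
        exact Gamma_add_le_rpow_mul_Gamma hn0 hβ0.le hβ1
    _ = (n : ℝ) ^ (β - 1) / Real.Gamma β := by
        rw [Real.rpow_sub_one hn0.ne']
        field_simp

end Varrho

section RiemannLiouville

/-- The Riemann–Liouville fractional integral of order `β` based at `0`,
`(I^β f)(t) = Γ(β)⁻¹ ∫₀ᵗ (t - x)^(β - 1) f(x) dx`: the operator that the convolution with the
weights `τ ^ β * varrho β n` discretizes. Meant for `0 < β`, where the kernel is integrable. -/
noncomputable def riemannLiouville (β : ℝ) (f : ℝ → ℝ) (t : ℝ) : ℝ :=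
  (Real.Gamma β)⁻¹ * ∫ x in (0 : ℝ)..t, (t - x) ^ (β - 1) * f x

variable {β : ℝ}

theorem intervalIntegrable_sub_rpow (hβ : 0 < β) (c a b : ℝ) :
    IntervalIntegrable (fun x : ℝ ↦ (c - x) ^ (β - 1)) volume a b := by
  simpa using (intervalIntegral.intervalIntegrable_rpow' (a := c - a) (b := c - b)
    (by linarith : -1 < β - 1)).comp_sub_left c

theorem riemannLiouville_comp_mul_right (β : ℝ) (f : ℝ → ℝ) {τ t : ℝ} (hτ : 0 < τ) (ht : 0 ≤ t) :
    riemannLiouville β f (t * τ) = τ ^ β * riemannLiouville β (fun x ↦ f (x * τ)) t := by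
  have change_var : τ * ∫ x in (0 : ℝ)..t, (t * τ - x * τ) ^ (β - 1) * f (x * τ) =
      ∫ x in (0 : ℝ)..t * τ, (t * τ - x) ^ (β - 1) * f x := by
    simpa using intervalIntegral.mul_integral_comp_mul_right (a := 0) (b := t)
      (f := fun x ↦ (t * τ - x) ^ (β - 1) * f x) τ
  have homogeneous : ∫ x in (0 : ℝ)..t, (t * τ - x * τ) ^ (β - 1) * f (x * τ) =
      τ ^ (β - 1) * ∫ x in (0 : ℝ)..t, (t - x) ^ (β - 1) * f (x * τ) := by
    rw [← intervalIntegral.integral_const_mul]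
    refine intervalIntegral.integral_congr fun x hx ↦ ?_
    rw [Set.uIcc_of_le ht] at hx
    simp only [← sub_mul, Real.mul_rpow (sub_nonneg.2 hx.2) hτ.le]
    ring
  rw [riemannLiouville, riemannLiouville, ← change_var, homogeneous, Real.rpow_sub_one hτ.ne']
  field_simp

theorem riemannLiouville_rpow (hβ : 0 < β) {γ t : ℝ} (hγ : -1 < γ) (ht : 0 < t) :
    riemannLiouville β (fun x ↦ x ^ γ) t =
      Real.Gamma (1 + γ) / Real.Gamma (1 + γ + β) * t ^ (γ + β) := by
  have beta_integral : ∫ x in (0 : ℝ)..t, (t - x) ^ (β - 1) * x ^ γ =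
      t ^ (γ + β) * (Real.Gamma (1 + γ) * Real.Gamma β / Real.Gamma (1 + γ + β)) := by
    have h := Complex.betaIntegral_scaled ((1 + γ : ℝ) : ℂ) (β : ℂ) ht
    rw [Complex.betaIntegral_eq_Gamma_mul_div _ _ (by rw [Complex.ofReal_re]; linarith)
      (by rwa [Complex.ofReal_re])] at h
    have integrand : ∫ x in (0 : ℝ)..t,
        (x : ℂ) ^ (((1 + γ : ℝ) : ℂ) - 1) * ((t : ℂ) - x) ^ ((β : ℂ) - 1) =
          ∫ x in (0 : ℝ)..t, (((t - x) ^ (β - 1) * x ^ γ : ℝ) : ℂ) := by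
      refine intervalIntegral.integral_congr fun x hx ↦ ?_
      rw [Set.uIcc_of_le ht.le] at hx
      simp only [Complex.ofReal_mul, Complex.ofReal_cpow hx.1,
        Complex.ofReal_cpow (sub_nonneg.2 hx.2)]
      push_cast
      ring_nf
    have exponent : ((1 + γ : ℝ) : ℂ) + (β : ℂ) - 1 = ((γ + β : ℝ) : ℂ) := by
      push_cast
      ring
    rw [integrand, intervalIntegral.integral_ofReal, exponent, ← Complex.ofReal_cpow ht.le,
      ← Complex.ofReal_add, Complex.Gamma_ofReal, Complex.Gamma_ofReal,
      Complex.Gamma_ofReal] at h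
    exact_mod_cast h
  rw [riemannLiouville, beta_integral]
  field_simp

theorem integrableOn_sub_rpow_mul_of_monotoneOn (hβ : 0 < β) {f : ℝ → ℝ} {t : ℝ} (ht : 0 ≤ t)
    (hf : MonotoneOn f (Set.Icc 0 t)) :
    IntegrableOn (fun x ↦ (t - x) ^ (β - 1) * f x) (Set.Ico 0 t) := by
  have kernel : IntegrableOn (fun x ↦ (t - x) ^ (β - 1)) (Set.Icc 0 t) :=
    (intervalIntegrable_iff_integrableOn_Icc_of_le ht).1 (intervalIntegrable_sub_rpow hβ t 0 t)
  have f_integrable : IntegrableOn f (Set.Icc 0 t) := hf.integrableOn_isCompact isCompact_Icc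
  refine IntegrableOn.mono_set ?_ Set.Ico_subset_Icc_self
  refine kernel.mul_bdd (c := max |f 0| |f t|) f_integrable.aestronglyMeasurable ?_
  filter_upwards [ae_restrict_mem measurableSet_Icc] with x hx
  exact abs_le_max_abs_abs (hf (Set.left_mem_Icc.2 ht) hx hx.1)
    (hf hx (Set.right_mem_Icc.2 ht) hx.2)

-- Half-open, because `(t - x) ^ (β - 1)` has the junk value `0` at `x = t` when `β < 1`.
theorem monotoneOn_sub_rpow_mul (hβ : β ≤ 1) {f : ℝ → ℝ} {a t : ℝ}
    (hf : MonotoneOn f (Set.Ico a t)) (hf0 : ∀ x ∈ Set.Ico a t, 0 ≤ f x) :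
    MonotoneOn (fun x ↦ (t - x) ^ (β - 1) * f x) (Set.Ico a t) := by
  refine MonotoneOn.mul (fun x _ y hy hxy ↦ ?_) hf (fun x hx ↦ ?_) hf0
  · exact Real.rpow_le_rpow_of_nonpos (sub_pos.2 hy.2) (by linarith) (by linarith)
  · exact Real.rpow_nonneg (sub_nonneg.2 hx.2.le) _

theorem sum_sub_rpow_mul_le_integral (hβ0 : 0 < β) (hβ1 : β ≤ 1) {f : ℝ → ℝ} {k : ℕ}
    (hf : MonotoneOn f (Set.Icc 0 (k : ℝ))) (hf0 : 0 ≤ f 0) :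
    ∑ j ∈ range k, ((k : ℝ) - j) ^ (β - 1) * f j ≤
      ∫ x in (0 : ℝ)..k, (k - x) ^ (β - 1) * f x := by
  have integrand_mono := monotoneOn_sub_rpow_mul hβ1 (hf.mono Set.Ico_subset_Icc_self)
    fun x hx ↦ hf0.trans (hf ⟨le_rfl, k.cast_nonneg⟩ (Set.Ico_subset_Icc_self hx) hx.1)
  have h := sum_Ico_le_integral_of_le (f := fun x ↦ ((k : ℝ) - x) ^ (β - 1) * f x) k.zero_le
    (fun j hj x hx ↦ ?_)
    (by simpa only [Nat.cast_zero] using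
      integrableOn_sub_rpow_mul_of_monotoneOn hβ0 k.cast_nonneg hf)
  · simpa only [range_eq_Ico, Nat.cast_zero] using h
  · have hj0 : (0 : ℝ) ≤ j := j.cast_nonneg
    have hxk : x < k := hx.2.trans_le (mod_cast hj.2)
    exact integrand_mono ⟨hj0, hx.1.trans_lt hxk⟩ ⟨hj0.trans hx.1, hxk⟩ hx.1

theorem sum_varrho_mul_le_riemannLiouville (hβ0 : 0 < β) (hβ1 : β ≤ 1) {f : ℝ → ℝ} {k : ℕ}
    (hf : MonotoneOn f (Set.Icc 0 (k : ℝ))) (hf0 : 0 ≤ f 0) :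
    ∑ j ∈ range k, varrho β (k - j) * f j ≤ riemannLiouville β f k := by
  calc ∑ j ∈ range k, varrho β (k - j) * f j
      ≤ ∑ j ∈ range k, (Real.Gamma β)⁻¹ * (((k : ℝ) - j) ^ (β - 1) * f j) := by
        refine sum_le_sum fun j hj ↦ ?_
        have hjk : j < k := mem_range.1 hj
        have hfj : 0 ≤ f j :=
          hf0.trans (hf ⟨le_rfl, k.cast_nonneg⟩ ⟨j.cast_nonneg, mod_cast hjk.le⟩ j.cast_nonneg)
        have hϱ := varrho_le_rpow_div_Gamma hβ0 hβ1 (Nat.sub_pos_of_lt hjk)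
        rw [Nat.cast_sub hjk.le, div_eq_inv_mul] at hϱ
        simpa only [mul_assoc] using mul_le_mul_of_nonneg_right hϱ hfj
    _ ≤ riemannLiouville β f k := by
        rw [← mul_sum, riemannLiouville]
        gcongr
        exact sum_sub_rpow_mul_le_integral hβ0 hβ1 hf hf0

theorem sum_rpow_mul_varrho_mul_le_riemannLiouville (hβ0 : 0 < β) (hβ1 : β ≤ 1) {f : ℝ → ℝ}
    {τ : ℝ} (hτ : 0 < τ) {k : ℕ} (hf : MonotoneOn f (Set.Icc 0 (k * τ))) (hf0 : 0 ≤ f 0) :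
    ∑ j ∈ range k, τ ^ β * varrho β (k - j) * f (j * τ) ≤ riemannLiouville β f (k * τ) := by
  have hf_scaled : MonotoneOn (fun x ↦ f (x * τ)) (Set.Icc 0 (k : ℝ)) := by
    intro x hx y hy hxy
    have scale : ∀ z ∈ Set.Icc 0 (k : ℝ), z * τ ∈ Set.Icc 0 (k * τ) := fun z hz ↦
      ⟨mul_nonneg hz.1 hτ.le, mul_le_mul_of_nonneg_right hz.2 hτ.le⟩
    exact hf (scale x hx) (scale y hy) (mul_le_mul_of_nonneg_right hxy hτ.le)
  simp only [riemannLiouville_comp_mul_right β f hτ k.cast_nonneg, mul_assoc, ← mul_sum]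
  gcongr
  exact sum_varrho_mul_le_riemannLiouville hβ0 hβ1 hf_scaled (by simpa using hf0)

end RiemannLiouville

section MittagLeffler

variable {β : ℝ}

theorem hasSum_mittagLeffler (hβ : 0 < β) (z : ℝ) :
    HasSum (fun l : ℕ ↦ z ^ l / Real.Gamma (1 + l * β)) (mittagLeffler β z) := by
  refine Summable.hasSum ?_
  rcases eq_or_ne z 0 with rfl | hz
  · exact summable_of_ne_finset_zero (s := {0}) fun l hl ↦ by simp_all
  have hΓ : ∀ l : ℕ, 0 < Real.Gamma (1 + l * β) := fun l ↦
    Real.Gamma_pos_of_pos (by positivity)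
  have argument : Tendsto (fun l : ℕ ↦ 1 + l * β) atTop atTop :=
    tendsto_atTop_add_const_left _ _ (tendsto_natCast_atTop_atTop.atTop_mul_const hβ)
  have ratio : Tendsto
      (fun l : ℕ ↦ |z| * (Real.Gamma (1 + l * β) / Real.Gamma (1 + l * β + β))) atTop (𝓝 0) := by
    simpa using ((tendsto_Gamma_div_Gamma_add_atTop hβ).comp argument).const_mul |z|
  refine summable_of_ratio_test_tendsto_lt_one zero_lt_one
    (.of_forall fun l ↦ div_ne_zero (pow_ne_zero l hz) (hΓ l).ne') (ratio.congr fun l ↦ ?_)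
  have hΓ_succ := hΓ (l + 1)
  rw [show 1 + ((l + 1 : ℕ) : ℝ) * β = 1 + l * β + β by push_cast; ring] at hΓ_succ ⊢
  have hΓl := hΓ l
  simp only [norm_div, norm_pow, Real.norm_eq_abs, abs_of_pos hΓl, abs_of_pos hΓ_succ, pow_succ,
    abs_mul, abs_pow]
  field_simp

theorem mittagLeffler_zero (β : ℝ) : mittagLeffler β 0 = 1 := by
  rw [mittagLeffler, tsum_eq_single 0 fun l hl ↦ by simp [hl]]
  simp

theorem monotoneOn_mittagLeffler (hβ : 0 < β) : MonotoneOn (mittagLeffler β) (Set.Ici 0) := by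
  intro z hz w _ hzw
  refine hasSum_le (fun l ↦ ?_) (hasSum_mittagLeffler hβ z) (hasSum_mittagLeffler hβ w)
  have hz0 : 0 ≤ z := hz
  gcongr

theorem monotoneOn_mittagLeffler_mul_rpow (hβ : 0 < β) {μ : ℝ} (hμ : 0 ≤ μ) :
    MonotoneOn (fun x ↦ mittagLeffler β (μ * x ^ β)) (Set.Ici 0) := by
  intro x hx y hy hxy
  have hx0 : 0 ≤ x := hx
  have hy0 : 0 ≤ y := hy
  exact monotoneOn_mittagLeffler hβ (Set.mem_Ici.2 (by positivity)) (Set.mem_Ici.2 (by positivity))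
    (by gcongr)

theorem mul_riemannLiouville_mittagLeffler_term (hβ : 0 < β) (μ : ℝ) {t : ℝ} (ht : 0 < t) (l : ℕ) :
    μ * riemannLiouville β (fun x ↦ (μ * x ^ β) ^ l / Real.Gamma (1 + l * β)) t =
      (μ * t ^ β) ^ (l + 1) / Real.Gamma (1 + (l + 1 : ℕ) * β) := by
  have monomial : riemannLiouville β (fun x ↦ (μ * x ^ β) ^ l / Real.Gamma (1 + l * β)) t =
      μ ^ l / Real.Gamma (1 + l * β) * riemannLiouville β (fun x ↦ x ^ (l * β)) t := by
    rw [riemannLiouville, riemannLiouville, mul_left_comm]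
    congr 1
    rw [← intervalIntegral.integral_const_mul]
    refine intervalIntegral.integral_congr fun x hx ↦ ?_
    rw [Set.uIcc_of_le ht.le] at hx
    simp only [mul_pow, mul_comm (l : ℝ) β, Real.rpow_mul_natCast hx.1]
    ring
  have exponent : l * β + β = β * (l + 1 : ℕ) := by
    push_cast
    ring
  rw [monomial, riemannLiouville_rpow hβ (by linarith [show 0 ≤ l * β by positivity]) ht,
    add_assoc, exponent, Real.rpow_mul_natCast ht.le, mul_comm β]
  field_simp
  ring

theorem hasSum_riemannLiouville_mittagLeffler_term (hβ : 0 < β) (μ : ℝ) {t : ℝ} (ht : 0 ≤ t) :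
    HasSum (fun l : ℕ ↦ riemannLiouville β (fun x ↦ (μ * x ^ β) ^ l / Real.Gamma (1 + l * β)) t)
      (riemannLiouville β (fun x ↦ mittagLeffler β (μ * x ^ β)) t) := by
  have majorant := hasSum_mittagLeffler hβ (|μ| * t ^ β)
  refine HasSum.mul_left _ (intervalIntegral.hasSum_integral_of_dominated_convergence
    (fun l x ↦ (t - x) ^ (β - 1) * ((|μ| * t ^ β) ^ l / Real.Gamma (1 + l * β)))
    (fun l ↦ by fun_prop) (fun l ↦ .of_forall fun x hx ↦ ?_)
    (.of_forall fun x _ ↦ majorant.summable.mul_left _) ?_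
    (.of_forall fun x _ ↦ (hasSum_mittagLeffler hβ _).mul_left _))
  · rw [Set.uIoc_of_le ht] at hx
    have hΓ : 0 < Real.Gamma (1 + l * β) := Real.Gamma_pos_of_pos (by positivity)
    have hkernel : 0 ≤ (t - x) ^ (β - 1) := Real.rpow_nonneg (sub_nonneg.2 hx.2) _
    have hx0 := hx.1.le
    rw [norm_mul, norm_div, norm_pow, norm_mul, Real.norm_of_nonneg hkernel,
      Real.norm_of_nonneg hΓ.le, Real.norm_eq_abs, Real.norm_of_nonneg (Real.rpow_nonneg hx0 β)]
    gcongr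
    exact hx.2
  · simpa only [tsum_mul_left] using (intervalIntegrable_sub_rpow hβ t 0 t).mul_const _

theorem mul_riemannLiouville_mittagLeffler (hβ : 0 < β) (μ : ℝ) {t : ℝ} (ht : 0 < t) :
    μ * riemannLiouville β (fun x ↦ mittagLeffler β (μ * x ^ β)) t =
      mittagLeffler β (μ * t ^ β) - 1 := by
  have shifted : HasSum (fun l : ℕ ↦ (μ * t ^ β) ^ (l + 1) / Real.Gamma (1 + (l + 1 : ℕ) * β))
      (mittagLeffler β (μ * t ^ β) - 1) := by
    simpa using (hasSum_nat_add_iff' 1).2 (hasSum_mittagLeffler hβ (μ * t ^ β))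
  refine HasSum.unique ?_ shifted
  simpa only [mul_riemannLiouville_mittagLeffler_term hβ μ ht] using
    (hasSum_riemannLiouville_mittagLeffler_term hβ μ ht.le).mul_left μ

end MittagLeffler

theorem mittagLeffler_convolution_bound (β : ℝ) (hβ0 : 0 < β) (hβ1 : β < 1)
    (τ : ℝ) (hτ : 0 < τ) (μ : ℝ) (hμ : 0 < μ) (k : ℕ) (hk : 1 ≤ k) :
    μ * ∑ j ∈ Finset.range k,
          (τ ^ β * varrho β (k - j)) * mittagLeffler β (μ * ((j : ℝ) * τ) ^ β)
      ≤ mittagLeffler β (μ * ((k : ℝ) * τ) ^ β) - 1 := by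
  have hkτ : 0 < k * τ := mul_pos (mod_cast hk) hτ
  have hmono := (monotoneOn_mittagLeffler_mul_rpow hβ0 hμ.le).mono
    (Set.Icc_subset_Ici_self : Set.Icc 0 (k * τ) ⊆ Set.Ici 0)
  have hzero : 0 ≤ mittagLeffler β (μ * 0 ^ β) := by
    simp [Real.zero_rpow hβ0.ne', mittagLeffler_zero]
  rw [← mul_riemannLiouville_mittagLeffler hβ0 μ hkτ]
  gcongr
  exact sum_rpow_mul_varrho_mul_le_riemannLiouville hβ0 hβ1.le hτ hmono hzero
end

section
/- (Grönwall inequality without step-size restriction.) Let n_T ≥ 1, let (g^k)_{k=1}^{n_T} be a nonnegative real sequence, and let τ > 0 be arbitrary. If a nonnegative sequence (v^k)_{k=0}^{n_T} satisfies D^{(β)}_τ (v^k)² ≤ v^k·g^k for all 1 ≤ k ≤ n_T, then for all 1 ≤ k ≤ n_T, v^k ≤ 2·( v^0 + max_{1≤m≤k} ∑_{j=1}^{m} P_{m−j}·g^j ). -/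
open Finset

/-- The coefficients `ϖ_j = (−1)^j C(β, j)` of `(1−z)^β`. -/
noncomputable def varpi (β : ℝ) (j : ℕ) : ℝ := (-1 : ℝ) ^ j * genBinom β j

/-!
Since `(1 - z)^(-β) (1 - z)^β = 1`, convolving the hypothesis with the nonnegative kernel `ϱ`
inverts the discrete fractional derivative and gives `(v n)² ≤ (v 0)² + ∑ P_{n-m} g m v m`. Reading
this at an index `K ≤ k` where `|v|` is largest, and writing `G` for the maximum of the sums
`∑ P_{m-j} g j`, one gets `|v K|² ≤ |v 0|² + G |v K|`, whence `|v k| ≤ |v K| ≤ |v 0| + G`. This is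
the claim with constant `1` in place of `2`.
-/

section BinomialKernels

open PowerSeries

theorem genBinom_eq_choose (α : ℝ) (j : ℕ) : genBinom α j = Ring.choose α j := by
  have smeval_eq_prod : (descPochhammer ℤ j).smeval α = ∏ i ∈ range j, (α - i) := by
    rw [← descPochhammer_eval_eq_prod_range, ← Polynomial.aeval_eq_smeval, Polynomial.aeval_def,
      Polynomial.eval₂_eq_eval_map, descPochhammer_map]
  rw [genBinom, Ring.choose_eq_smul, smeval_eq_prod, smul_eq_mul, div_eq_inv_mul]

theorem mk_varpi (β : ℝ) :
    PowerSeries.mk (varpi β) = rescale (-1) (PowerSeries.binomialSeries ℝ β) := by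
  ext j
  rw [coeff_mk, varpi, genBinom_eq_choose, coeff_rescale, binomialSeries_coeff, smul_eq_mul,
    mul_one]

theorem varrho_eq_varpi_neg (β : ℝ) : varrho β = varpi (-β) := rfl

theorem mk_varrho_mul_mk_varpi (β : ℝ) :
    PowerSeries.mk (varrho β) * PowerSeries.mk (varpi β) = 1 := by
  rw [varrho_eq_varpi_neg, mk_varpi, mk_varpi, ← map_mul, ← binomialSeries_add, neg_add_cancel,
    binomialSeries_zero, map_one]

theorem varrho_eq_prod_div_factorial (β : ℝ) (j : ℕ) :
    varrho β j = (∏ i ∈ range j, (β + i)) / j.factorial := by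
  have prod_neg_sub : ∏ i ∈ range j, (-β - i) = (-1) ^ j * ∏ i ∈ range j, (β + i) := by
    simp only [← neg_add', prod_neg, card_range]
  rw [varrho, genBinom, prod_neg_sub, ← mul_div_assoc, ← mul_assoc, ← mul_pow, neg_one_mul,
    neg_neg, one_pow, one_mul]

theorem varrho_nonneg {β : ℝ} (hβ : 0 ≤ β) (j : ℕ) : 0 ≤ varrho β j := by
  rw [varrho_eq_prod_div_factorial]
  positivity

end BinomialKernels

section Convolution

open PowerSeries

variable {R : Type*} [CommSemiring R]

theorem coeff_mk_mul_eq_sum_range (c : ℕ → R) (f : PowerSeries R) (n : ℕ) :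
    coeff n (PowerSeries.mk c * f) = ∑ j ∈ range (n + 1), c (n - j) * coeff j f := by
  rw [mul_comm, coeff_mul, Nat.sum_antidiagonal_eq_sum_range_succ_mk]
  simp only [coeff_mk, mul_comm]

theorem sum_range_mul_sum_range_eq_of_mk_mul_mk_eq_one {p a : ℕ → R}
    (hpa : PowerSeries.mk p * PowerSeries.mk a = 1) (w : ℕ → R) (k : ℕ) :
    ∑ m ∈ range (k + 1), p (k - m) * ∑ j ∈ range (m + 1), a (m - j) * w j = w k := by
  calc ∑ m ∈ range (k + 1), p (k - m) * ∑ j ∈ range (m + 1), a (m - j) * w j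
      = coeff k (PowerSeries.mk p * (PowerSeries.mk a * PowerSeries.mk w)) := by
        simp only [coeff_mk_mul_eq_sum_range, coeff_mk]
    _ = w k := by rw [← mul_assoc, hpa, one_mul, coeff_mk]

theorem le_sum_Icc_of_sum_range_mul_le [PartialOrder R] [IsOrderedRing R] {p a w f : ℕ → R}
    {k : ℕ} (hpa : PowerSeries.mk p * PowerSeries.mk a = 1) (hp : ∀ n, 0 ≤ p n) (hw : w 0 = 0)
    (hf : ∀ m ∈ Icc 1 k, ∑ j ∈ range (m + 1), a (m - j) * w j ≤ f m) :
    w k ≤ ∑ m ∈ Icc 1 k, p (k - m) * f m := by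
  calc w k = ∑ m ∈ range (k + 1), p (k - m) * ∑ j ∈ range (m + 1), a (m - j) * w j :=
        (sum_range_mul_sum_range_eq_of_mk_mul_mk_eq_one hpa w k).symm
    _ = ∑ m ∈ Icc 1 k, p (k - m) * ∑ j ∈ range (m + 1), a (m - j) * w j := by
        rw [Nat.range_succ_eq_Icc_zero, ← insert_Icc_add_one_left_eq_Icc k.zero_le,
          sum_insert (by simp)]
        simp [hw]
    _ ≤ ∑ m ∈ Icc 1 k, p (k - m) * f m :=
        sum_le_sum fun m hm => mul_le_mul_of_nonneg_left (hf m hm) (hp _)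

end Convolution

section QuadraticGronwall

variable {R : Type*} [CommRing R] [LinearOrder R] [IsStrictOrderedRing R]

theorem le_add_of_sq_le_sq_add_mul {x a G : R} (ha : 0 ≤ a) (hG : 0 ≤ G)
    (h : x ^ 2 ≤ a ^ 2 + G * x) : x ≤ a + G := by
  by_contra! hlt
  have x_pos : 0 < x := (add_nonneg ha hG).trans_lt hlt
  have sq_le_mul : a * a ≤ a * x := mul_le_mul_of_nonneg_left (by linarith) ha
  have mul_lt_sq : (a + G) * x < x * x := mul_lt_mul_of_pos_right hlt x_pos
  linarith

theorem abs_le_abs_add_of_sq_le_sq_add_sum {b : ℕ → ℕ → R} {v : ℕ → R} {G : R} {k : ℕ}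
    (hb : ∀ n ∈ Icc 1 k, ∀ m ∈ Icc 1 n, 0 ≤ b n m) (hG : 0 ≤ G)
    (hbG : ∀ n ∈ Icc 1 k, ∑ m ∈ Icc 1 n, b n m ≤ G)
    (hv : ∀ n ∈ Icc 1 k, v n ^ 2 ≤ v 0 ^ 2 + ∑ m ∈ Icc 1 n, b n m * v m) :
    |v k| ≤ |v 0| + G := by
  obtain ⟨K, hK, le_abs_K⟩ := (Icc 0 k).exists_max_image (fun m => |v m|) ⟨0, by simp⟩
  have hKk : K ≤ k := (mem_Icc.mp hK).2
  refine (le_abs_K k (by simp)).trans ?_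
  rcases K.eq_zero_or_pos with rfl | K_pos
  · exact le_add_of_nonneg_right hG
  have hK1 : K ∈ Icc 1 k := mem_Icc.mpr ⟨K_pos, hKk⟩
  have sum_le : ∑ m ∈ Icc 1 K, b K m * v m ≤ G * |v K| :=
    calc ∑ m ∈ Icc 1 K, b K m * v m
        ≤ ∑ m ∈ Icc 1 K, b K m * |v K| := by
          refine sum_le_sum fun m hm => mul_le_mul_of_nonneg_left ?_ (hb K hK1 m hm)
          exact (le_abs_self _).trans
            (le_abs_K m (mem_Icc.mpr ⟨m.zero_le, (mem_Icc.mp hm).2.trans hKk⟩))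
      _ = (∑ m ∈ Icc 1 K, b K m) * |v K| := (sum_mul ..).symm
      _ ≤ G * |v K| := mul_le_mul_of_nonneg_right (hbG K hK1) (abs_nonneg _)
  apply le_add_of_sq_le_sq_add_mul (abs_nonneg _) hG
  rw [sq_abs, sq_abs]
  exact (hv K hK1).trans (by gcongr)

end QuadraticGronwall

theorem sq_le_sq_add_sum_of_fractional_deriv_sq_le {β τ : ℝ} (hβ : 0 ≤ β) (hτ : 0 < τ)
    {v f : ℕ → ℝ} {k : ℕ}
    (hineq : ∀ m ∈ Icc 1 k,
      τ ^ (-β) * ∑ j ∈ range (m + 1), varpi β (m - j) * (v j ^ 2 - v 0 ^ 2) ≤ f m) :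
    v k ^ 2 ≤ v 0 ^ 2 + ∑ m ∈ Icc 1 k, τ ^ β * varrho β (k - m) * f m := by
  have conv_le : ∀ m ∈ Icc 1 k,
      ∑ j ∈ range (m + 1), varpi β (m - j) * (v j ^ 2 - v 0 ^ 2) ≤ τ ^ β * f m := by
    intro m hm
    rw [← inv_mul_le_iff₀ (Real.rpow_pos_of_pos hτ β), ← Real.rpow_neg hτ.le]
    exact hineq m hm
  have sub_le := le_sum_Icc_of_sum_range_mul_le (w := fun j => v j ^ 2 - v 0 ^ 2)
    (mk_varrho_mul_mk_varpi β) (varrho_nonneg hβ) (sub_self _) conv_le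
  simpa only [sub_le_iff_le_add', mul_left_comm, mul_assoc] using sub_le

theorem discrete_fractional_gronwall_no_restriction_general {β τ : ℝ} (hβ : 0 ≤ β) (hτ : 0 < τ)
    {g v : ℕ → ℝ} {k : ℕ} (hk : 1 ≤ k) (hg : ∀ m ∈ Icc 1 k, 0 ≤ g m)
    (hineq : ∀ m ∈ Icc 1 k,
      τ ^ (-β) * ∑ j ∈ range (m + 1), varpi β (m - j) * (v j ^ 2 - v 0 ^ 2) ≤ v m * g m) :
    |v k| ≤ |v 0| + (Icc 1 k).sup' (nonempty_Icc.mpr hk)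
      (fun m => ∑ j ∈ Icc 1 m, τ ^ β * varrho β (m - j) * g j) := by
  have Icc_subset {n : ℕ} (hn : n ∈ Icc 1 k) : Icc 1 n ⊆ Icc 1 k :=
    Icc_subset_Icc_right (mem_Icc.mp hn).2
  have weight_nonneg : ∀ n ∈ Icc 1 k, ∀ m ∈ Icc 1 n, 0 ≤ τ ^ β * varrho β (n - m) * g m :=
    fun n hn m hm => mul_nonneg (mul_nonneg (Real.rpow_nonneg hτ.le β) (varrho_nonneg hβ _))
      (hg m (Icc_subset hn hm))
  have k_mem : k ∈ Icc 1 k := right_mem_Icc.mpr hk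
  refine abs_le_abs_add_of_sq_le_sq_add_sum weight_nonneg
    (le_sup'_of_le _ k_mem (sum_nonneg (weight_nonneg k k_mem)))
    (fun n hn => le_sup' (fun m => ∑ j ∈ Icc 1 m, τ ^ β * varrho β (m - j) * g j) hn)
    (fun n hn => ?_)
  simpa only [mul_assoc, mul_comm (g _)] using
    sq_le_sq_add_sum_of_fractional_deriv_sq_le hβ hτ fun m hm => hineq m (Icc_subset hn hm)

/-- Discrete fractional Grönwall inequality without step-size restriction. -/
theorem discrete_fractional_gronwall_no_restriction (β τ : ℝ) (hβ0 : 0 < β) (hβ1 : β < 1)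
    (hτ : 0 < τ)
    (nT : ℕ) (hnT : 1 ≤ nT)
    (g v : ℕ → ℝ)
    (hg : ∀ k, 1 ≤ k → k ≤ nT → 0 ≤ g k)
    (hv : ∀ k ≤ nT, 0 ≤ v k)
    (hineq : ∀ k : ℕ, 1 ≤ k → k ≤ nT →
      τ ^ (-β) * ∑ j ∈ Finset.range (k + 1), varpi β (k - j) * ((v j) ^ 2 - (v 0) ^ 2)
        ≤ v k * g k) :
    ∀ k : ℕ, ∀ hk : 1 ≤ k, k ≤ nT →
      v k ≤ 2 * (v 0 + (Finset.Icc 1 k).sup' (Finset.nonempty_Icc.mpr hk)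
          (fun m => ∑ j ∈ Finset.Icc 1 m, τ ^ β * varrho β (m - j) * g j)) := by
  intro k hk hkn
  have abs_le := discrete_fractional_gronwall_no_restriction_general hβ0.le hτ hk
    (fun m hm => hg m (mem_Icc.mp hm).1 ((mem_Icc.mp hm).2.trans hkn))
    (fun m hm => hineq m (mem_Icc.mp hm).1 ((mem_Icc.mp hm).2.trans hkn))
  rw [abs_of_nonneg (hv k hkn), abs_of_nonneg (hv 0 nT.zero_le)] at abs_le
  linarith [hv k hkn]
end
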